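/- Suppose n is odd. Then the fixed subring A^G is generated as a ℂ-algebra by the orbit sums of degrees n, 2n and 3n; that is, A^G equals the ℂ-subalgebra of A generated by the set {O(a,b,c) : a, b, c ≥ 0, a+2b+c ∈ {n, 2n, 3n}}. (Together with the lower bound β(g) ≥ 3n, this shows β(g) = 3n for the action on the down-up algebra A(0,1) when n is odd.) -/

import Mathlib

/-!
Setting: `lam n = exp(2πi/n)` is a primitive `n`-th root of unity in `ℂ`.
`DUAlg` is the graded down-up algebra `A(0,1) = ℂ⟨u,d⟩/(d²u - ud², du² - u²d)`,
with generators `uGen`, `dGen`.  The automorphism `g` (of order `2n`) is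
determined by `g u = d`, `g d = lam n • u`, and generates the cyclic group `G`,
so that the fixed subring `A^G` is `{a | g a = a}`.  The orbit sum is
`orbitSum n a b c = u^a (du)^b d^c + (lam n)^(b+c) • (d^a (ud)^b u^c)`.
-/

noncomputable section

/-- `lam n = exp(2πi/n)`, a primitive `n`-th root of unity. -/
def lam (n : ℕ) : ℂ := Complex.exp (2 * (Real.pi : ℂ) * Complex.I / (n : ℂ))

/-- The defining relations of the down-up algebra `A(0,1)`:
`d²u = ud²` and `du² = u²d` (here `0` plays the role of `u`, `1` of `d`). -/
inductive DownUpRel : FreeAlgebra ℂ (Fin 2) → FreeAlgebra ℂ (Fin 2) → Prop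
  | rel1 : DownUpRel (FreeAlgebra.ι ℂ 1 * FreeAlgebra.ι ℂ 1 * FreeAlgebra.ι ℂ 0)
      (FreeAlgebra.ι ℂ 0 * FreeAlgebra.ι ℂ 1 * FreeAlgebra.ι ℂ 1)
  | rel2 : DownUpRel (FreeAlgebra.ι ℂ 1 * FreeAlgebra.ι ℂ 0 * FreeAlgebra.ι ℂ 0)
      (FreeAlgebra.ι ℂ 0 * FreeAlgebra.ι ℂ 0 * FreeAlgebra.ι ℂ 1)

/-- The graded down-up algebra `A(0,1)`. -/
abbrev DUAlg : Type := RingQuot DownUpRel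

/-- The generator `u` of `A(0,1)`. -/
def uGen : DUAlg := RingQuot.mkAlgHom ℂ DownUpRel (FreeAlgebra.ι ℂ 0)

/-- The generator `d` of `A(0,1)`. -/
def dGen : DUAlg := RingQuot.mkAlgHom ℂ DownUpRel (FreeAlgebra.ι ℂ 1)

/-- Orbit sum `O(a,b,c) = u^a (du)^b d^c + λ^(b+c) d^a (ud)^b u^c`. -/
def orbitSum (n a b c : ℕ) : DUAlg :=
  uGen ^ a * (dGen * uGen) ^ b * dGen ^ c
    + (lam n ^ (b + c)) • (dGen ^ a * (uGen * dGen) ^ b * uGen ^ c)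

/-- letters -/
def gen (b : Bool) : DUAlg := cond b uGen dGen

theorem rel_ddu : dGen * dGen * uGen = uGen * dGen * dGen := by
  have := RingQuot.mkAlgHom_rel ℂ DownUpRel.rel1
  simpa only [map_mul, uGen, dGen] using this

theorem rel_duu : dGen * uGen * uGen = uGen * uGen * dGen := by
  have := RingQuot.mkAlgHom_rel ℂ DownUpRel.rel2
  simpa only [map_mul, uGen, dGen] using this

theorem gen3 (x y z : Bool) : gen x * gen y * gen z = gen z * gen y * gen x := by
  cases x <;> cases y <;> cases z <;> simp [gen, rel_ddu, rel_duu]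

/-- words of odd length -/
inductive OddW : DUAlg → Prop
  | single (x : Bool) : OddW (gen x)
  | cons (x y : Bool) (a : DUAlg) : OddW a → OddW (gen x * gen y * a)

theorem odd1 {b : DUAlg} (hb : OddW b) (x y : Bool) : gen x * b * gen y = gen y * b * gen x := by
  induction hb generalizing x y with
  | single z => exact gen3 x z y
  | cons p q b' _ ih =>
    calc gen x * (gen p * gen q * b') * gen y
        = (gen x * gen p * gen q) * b' * gen y := by simp only [mul_assoc]
      _ = (gen q * gen p) * (gen x * b' * gen y) := by rw [gen3 x p q]; simp only [mul_assoc]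
      _ = (gen q * gen p * gen y) * b' * gen x := by rw [ih]; simp only [mul_assoc]
      _ = _ := by rw [gen3 q p y]; simp only [mul_assoc]

theorem odd2 {a : DUAlg} (ha : OddW a) (x y : Bool) : a * gen x * gen y = gen y * gen x * a := by
  induction ha generalizing x y with
  | single z => exact gen3 z x y
  | cons p q a' _ ih =>
    calc gen p * gen q * a' * gen x * gen y
        = gen p * gen q * (a' * gen x * gen y) := by simp only [mul_assoc]
      _ = (gen p * gen q * gen y) * gen x * a' := by rw [ih]; simp only [mul_assoc]
      _ = gen y * (gen q * gen p * gen x) * a' := by rw [gen3 p q y]; simp only [mul_assoc]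
      _ = _ := by rw [gen3 q p x]; simp only [mul_assoc]

theorem odd3 {a b : DUAlg} (ha : OddW a) (hb : OddW b) (y : Bool) :
    a * b * gen y = gen y * b * a := by
  induction ha generalizing y with
  | single z => exact odd1 hb z y
  | cons p q a' _ ih =>
    calc gen p * gen q * a' * b * gen y
        = gen p * gen q * (a' * b * gen y) := by simp only [mul_assoc]
      _ = (gen p * gen q * gen y) * b * a' := by rw [ih]; simp only [mul_assoc]
      _ = gen y * (gen q * gen p * b) * a' := by rw [gen3 p q y]; simp only [mul_assoc]
      _ = _ := by rw [← odd2 hb p q]; simp only [mul_assoc]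

theorem odd4 {a b c : DUAlg} (ha : OddW a) (hb : OddW b) (hc : OddW c) :
    a * b * c = c * b * a := by
  induction hc generalizing b with
  | single z => exact odd3 ha hb z
  | cons p q c' hc' ih =>
    calc a * b * (gen p * gen q * c')
        = (a * b * gen p) * gen q * c' := by simp only [mul_assoc]
      _ = gen p * b * (a * gen q * c') := by rw [odd3 ha hb]; simp only [mul_assoc]
      _ = gen p * (b * c' * gen q) * a := by rw [ih (OddW.single q)]; simp only [mul_assoc]
      _ = _ := by rw [odd3 hb hc']; simp only [mul_assoc]

/-- the word of a list of letters -/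
def mon (w : List Bool) : DUAlg := (w.map gen).prod

theorem mon_append (v w : List Bool) : mon (v ++ w) = mon v * mon w := by simp [mon]

theorem mon_odd : ∀ (w : List Bool), Odd w.length → OddW (mon w)
  | [], h => by simp at h
  | [x], _ => by simpa [mon] using OddW.single x
  | x :: y :: w, h => by
    have h' : Odd w.length := by
      simp only [List.length_cons] at h
      rw [Nat.odd_iff] at *; omega
    have := OddW.cons x y _ (mon_odd w h')
    simpa [mon, mul_assoc] using this

theorem u2_comm : Commute (uGen * uGen) dGen := by
  have := rel_duu
  rw [Commute, SemiconjBy, ← this, mul_assoc]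

theorem d2_comm : Commute (dGen * dGen) uGen := by
  have := rel_ddu
  rw [Commute, SemiconjBy, this, mul_assoc]

theorem mon_nf (w : List Bool) : ∃ a b c : ℕ, a + 2 * b + c = w.length ∧
    mon w = uGen ^ a * (dGen * uGen) ^ b * dGen ^ c := by
  induction w with
  | nil => exact ⟨0, 0, 0, by simp [mon]⟩
  | cons x w ih =>
    obtain ⟨a, b, c, hl, hw⟩ := ih
    have hx : mon (x :: w) = gen x * mon w := by simp [mon]
    rw [hx, hw]
    cases x with
    | true => exact ⟨a + 1, b, c, by simp; omega, by simp [gen, pow_succ', mul_assoc]⟩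
    | false =>
      simp only [gen, cond_false]
      rcases Nat.even_or_odd' a with ⟨e, rfl | rfl⟩
      · have hc : dGen * uGen ^ (2 * e) = uGen ^ (2 * e) * dGen := by
          rw [pow_mul, pow_two]; exact (u2_comm.pow_left e).eq.symm
        cases b with
        | zero =>
          refine ⟨2 * e, 0, c + 1, by simp; omega, ?_⟩
          simp only [pow_zero, mul_one]
          rw [← mul_assoc, hc, pow_succ', mul_assoc]
        | succ b =>
          refine ⟨2 * e + 1, b, c + 2, by simp; omega, ?_⟩
          have hq : Commute (dGen * dGen) ((dGen * uGen) ^ b) :=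
            Commute.pow_right (Commute.mul_right ((Commute.refl dGen).mul_left (Commute.refl _)) d2_comm) b
          calc dGen * (uGen ^ (2 * e) * (dGen * uGen) ^ (b + 1) * dGen ^ c)
              = (dGen * uGen ^ (2 * e)) * (dGen * uGen) ^ (b + 1) * dGen ^ c := by
                simp only [mul_assoc]
            _ = uGen ^ (2 * e) * (dGen * dGen * uGen) * (dGen * uGen) ^ b * dGen ^ c := by
                rw [hc, pow_succ']; simp only [mul_assoc]
            _ = uGen ^ (2 * e) * uGen * ((dGen * dGen) * (dGen * uGen) ^ b) * dGen ^ c := by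
                rw [rel_ddu]; simp only [mul_assoc]
            _ = _ := by
                rw [hq.eq, pow_succ uGen, add_comm c 2, pow_add dGen 2 c, pow_two dGen]
                simp only [mul_assoc]
      · refine ⟨2 * e, b + 1, c, by simp; omega, ?_⟩
        have hc : dGen * uGen ^ (2 * e) = uGen ^ (2 * e) * dGen := by
          rw [pow_mul, pow_two]; exact (u2_comm.pow_left e).eq.symm
        rw [pow_succ uGen, pow_succ' (dGen * uGen)]
        simp only [← mul_assoc]
        rw [hc]

theorem span_mon : Submodule.span ℂ (Set.range mon) = ⊤ := by
  have h1 : Algebra.adjoin ℂ (Set.range gen) = ⊤ := by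
    have h := congrArg (Subalgebra.map (RingQuot.mkAlgHom ℂ DownUpRel))
      (FreeAlgebra.adjoin_range_ι ℂ (Fin 2))
    rw [AlgHom.map_adjoin, Algebra.map_top,
      (AlgHom.range_eq_top _).2 (RingQuot.mkAlgHom_surjective ℂ DownUpRel)] at h
    rw [eq_top_iff, ← h]
    apply Algebra.adjoin_mono
    rintro _ ⟨_, ⟨i, rfl⟩, rfl⟩
    fin_cases i
    · exact ⟨true, rfl⟩
    · exact ⟨false, rfl⟩
  rw [eq_top_iff, ← Algebra.top_toSubmodule, ← h1, Algebra.adjoin_eq_span]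
  apply Submodule.span_mono
  intro x hx
  induction hx using Submonoid.closure_induction with
  | mem x hx =>
    obtain ⟨b, rfl⟩ := hx
    exact ⟨[b], by simp [mon]⟩
  | one => exact ⟨[], by simp [mon]⟩
  | mul x y _ _ hx hy =>
    obtain ⟨v, rfl⟩ := hx
    obtain ⟨w, rfl⟩ := hy
    exact ⟨v ++ w, mon_append v w⟩

section main

variable (n : ℕ) (g : DUAlg ≃ₐ[ℂ] DUAlg)

theorem g_mon (hgu : g uGen = dGen) (hgd : g dGen = lam n • uGen) (w : List Bool) :
    ∃ (t : ℂ) (v : List Bool), v.length = w.length ∧ g (mon w) = t • mon v := by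
  induction w with
  | nil => exact ⟨1, [], rfl, by simp [mon]⟩
  | cons x w ih =>
    obtain ⟨t, v, hl, hv⟩ := ih
    have hx : ∀ x w, mon (x :: w) = gen x * mon w := by simp [mon]
    cases x with
    | true =>
      refine ⟨t, false :: v, by simp [hl], ?_⟩
      rw [hx, map_mul, hv, hx]; simp [gen, hgu]
    | false =>
      refine ⟨t * lam n, true :: v, by simp [hl], ?_⟩
      rw [hx, map_mul, hv, hx]; simp [gen, hgd, smul_smul]

theorem gg_mon (hgu : g uGen = dGen) (hgd : g dGen = lam n • uGen) (w : List Bool) :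
    g (g (mon w)) = lam n ^ w.length • mon w := by
  induction w with
  | nil => simp [mon]
  | cons x w ih =>
    have hx : ∀ x w, mon (x :: w) = gen x * mon w := by simp [mon]
    rw [hx, map_mul, map_mul, ih]
    cases x <;> simp [gen, hgd, hgu, smul_smul, pow_succ]

theorem lam_prim (hn : n ≠ 0) : IsPrimitiveRoot (lam n) n := Complex.isPrimitiveRoot_exp n hn

theorem g_orbit (hgu : g uGen = dGen) (hgd : g dGen = lam n • uGen) (a b c : ℕ) :
    uGen ^ a * (dGen * uGen) ^ b * dGen ^ c + g (uGen ^ a * (dGen * uGen) ^ b * dGen ^ c) =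
      orbitSum n a b c := by
  simp [orbitSum, hgu, hgd, smul_pow, smul_smul, pow_add, mul_comm]

theorem TT (x y : DUAlg) (hy : g (g y) = y) :
    (x + g x) * (y + g y) = (x * y + g (x * y)) + (x * g y + g (x * g y)) := by
  simp only [map_mul, hy]
  noncomm_ring

theorem T_mem (hodd : Odd n) (hgu : g uGen = dGen) (hgd : g dGen = lam n • uGen)
    (B : Subalgebra ℂ DUAlg)
    (hB : ∀ a b c : ℕ, (a + 2 * b + c = n ∨ a + 2 * b + c = 2 * n ∨ a + 2 * b + c = 3 * n) →
      orbitSum n a b c ∈ B) (k : ℕ) :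
    ∀ w : List Bool, w.length = k * n → mon w + g (mon w) ∈ B := by
  have hn : n ≠ 0 := by rintro rfl; simp at hodd
  induction k using Nat.strong_induction_on with
  | _ k ih =>
  intro w hw
  by_cases hk : k < 4
  · by_cases h0 : k = 0
    · subst h0
      have : w = [] := by simpa using hw
      subst this
      simp only [mon, List.map_nil, List.prod_nil, map_one]
      exact add_mem (one_mem B) (one_mem B)
    · obtain ⟨a, b, c, hl, hm⟩ := mon_nf w
      rw [hm, g_orbit n g hgu hgd]
      apply hB
      rw [hl, hw]
      interval_cases k <;> simp_all
  · obtain ⟨m, rfl⟩ : ∃ m, k = m + 4 := ⟨k - 4, by omega⟩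
    obtain ⟨w1, w2, w3, w4, l1, l2, l3, l4, rfl⟩ : ∃ w1 w2 w3 w4 : List Bool,
        w1.length = (m + 1) * n ∧ w2.length = n ∧ w3.length = n ∧ w4.length = n ∧
        w = w1 ++ (w2 ++ (w3 ++ w4)) := by
      have hw' : w.length = (m + 1) * n + (n + (n + n)) := by rw [hw]; ring
      refine ⟨w.take ((m + 1) * n), (w.drop ((m + 1) * n)).take n,
        ((w.drop ((m + 1) * n)).drop n).take n, ((w.drop ((m + 1) * n)).drop n).drop n,
        ?_, ?_, ?_, ?_, ?_⟩
      · rw [List.length_take]; omega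
      · simp only [List.length_take, List.length_drop]; omega
      · simp only [List.length_take, List.length_drop]; omega
      · simp only [List.length_drop]; omega
      · simp only [List.take_append_drop]
    have fix : ∀ (j : ℕ) (v : List Bool), v.length = j * n → g (g (mon v)) = mon v := by
      intro j v hv
      rw [gg_mon n g hgu hgd, hv, mul_comm, pow_mul, (lam_prim n hn).pow_eq_one, one_pow, one_smul]
    obtain ⟨t, v4, lv, hv⟩ := g_mon n g hgu hgd w4
    have o2 := mon_odd w2 (l2 ▸ hodd)
    have o3 := mon_odd w3 (l3 ▸ hodd)
    have o4 := mon_odd w4 (l4 ▸ hodd)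
    have ov := mon_odd v4 (by rw [lv, l4]; exact hodd)
    have e1 : mon w2 * mon w3 * mon w4 = mon w4 * mon w3 * mon w2 := odd4 o2 o3 o4
    have e2 : mon w2 * mon w3 * g (mon w4) = g (mon w4) * mon w3 * mon w2 := by
      rw [hv, mul_smul_comm, odd4 o2 o3 ov]; simp
    -- the memberships
    have A1 := mul_mem (ih (m + 3) (by omega) (w1 ++ (w2 ++ w3)) (by simp [l1, l2, l3]; ring))
      (ih 1 (by omega) w4 (by simp [l4]))
    have A2 := mul_mem (ih (m + 1) (by omega) w1 l1)
      (ih 3 (by omega) (w4 ++ (w3 ++ w2)) (by simp [l4, l2, l3]; ring))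
    have A3' := ih (m + 2) (by omega) (w1 ++ v4) (by simp [l1, lv, l4]; ring)
    have A3'' : mon w1 * g (mon w4) + g (mon w1 * g (mon w4)) ∈ B := by
      have := B.smul_mem A3' t
      rw [hv]
      simpa [mon_append, smul_add] using this
    have A3 := mul_mem A3'' (ih 2 (by omega) (w3 ++ w2) (by simp [l2, l3]; ring))
    rw [TT g _ _ (fix 1 w4 (by simp [l4]))] at A1
    rw [TT g _ _ (fix 3 _ (by simp [l4, l2, l3]; ring))] at A2
    rw [TT g _ _ (fix 2 _ (by simp [l2, l3]; ring))] at A3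
    have key := B.smul_mem (add_mem A1 (sub_mem A2 A3)) (1 / 2 : ℂ)
    convert key using 1
    simp only [mon_append] at *
    have f1 : mon w1 * (mon w2 * (mon w3 * mon w4)) = mon w1 * (mon w4 * (mon w3 * mon w2)) := by
      rw [← mul_assoc (mon w2), e1, mul_assoc (mon w4)]
    have f2 : mon w1 * (mon w2 * mon w3) * g (mon w4) =
        mon w1 * g (mon w4) * (mon w3 * mon w2) := by
      rw [mul_assoc, e2]; simp only [mul_assoc]
    have f3 : mon w1 * (mon w2 * mon w3) * mon w4 = mon w1 * (mon w4 * (mon w3 * mon w2)) := by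
      rw [← f1]; simp only [mul_assoc]
    have f4 : mon w1 * g (mon w4 * (mon w3 * mon w2)) =
        mon w1 * g (mon w4) * g (mon w3 * mon w2) := by
      simp only [map_mul, mul_assoc]
    rw [f1, f2, f3, f4]
    module

end main

/-- If `n` is odd then the fixed subring `A^G` of the down-up algebra `A(0,1)`
is generated as a `ℂ`-algebra by the orbit sums of degrees `n`, `2n`, `3n`. -/
theorem fixed_eq_adjoin_three_n_of_odd (n : ℕ) (hodd : Odd n)
    (g : DUAlg ≃ₐ[ℂ] DUAlg) (hgu : g uGen = dGen) (hgd : g dGen = lam n • uGen) :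
    {x : DUAlg | g x = x} =
      ↑(Algebra.adjoin ℂ
        {x : DUAlg | ∃ a b c : ℕ,
          (a + 2 * b + c = n ∨ a + 2 * b + c = 2 * n ∨ a + 2 * b + c = 3 * n) ∧
          x = orbitSum n a b c}) := by
  have hn : n ≠ 0 := by rintro rfl; simp at hodd
  have hn' : (n : ℂ) ≠ 0 := by exact_mod_cast hn
  have hprim := lam_prim n hn
  set B := Algebra.adjoin ℂ {x : DUAlg | ∃ a b c : ℕ,
          (a + 2 * b + c = n ∨ a + 2 * b + c = 2 * n ∨ a + 2 * b + c = 3 * n) ∧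
          x = orbitSum n a b c} with hBdef
  have hB : ∀ a b c : ℕ, (a + 2 * b + c = n ∨ a + 2 * b + c = 2 * n ∨ a + 2 * b + c = 3 * n) →
      orbitSum n a b c ∈ B := fun a b c h => Algebra.subset_adjoin ⟨a, b, c, h, rfl⟩
  have hT := T_mem n g hodd hgu hgd B hB
  apply Set.Subset.antisymm
  · intro x hx
    have hx : g x = x := hx
    -- averaging operator
    let T : DUAlg →ₗ[ℂ] DUAlg := LinearMap.id + g.toLinearMap
    let g2 : DUAlg →ₗ[ℂ] DUAlg := g.toLinearMap ∘ₗ g.toLinearMap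
    let P : DUAlg →ₗ[ℂ] DUAlg := T ∘ₗ (∑ i ∈ Finset.range n, g2 ^ i)
    have hP : ∀ y, P y ∈ Subalgebra.toSubmodule B := by
      intro y
      have hy : y ∈ Submodule.span ℂ (Set.range mon) := by rw [span_mon]; trivial
      have hle : Submodule.span ℂ (Set.range mon) ≤ (Subalgebra.toSubmodule B).comap P := by
        rw [Submodule.span_le]
        rintro _ ⟨w, rfl⟩
        change P (mon w) ∈ Subalgebra.toSubmodule B
        have h2 : g2 (mon w) = lam n ^ w.length • mon w := gg_mon n g hgu hgd w
        have h2i : ∀ i : ℕ, (g2 ^ i) (mon w) = (lam n ^ w.length) ^ i • mon w := by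
          intro i
          induction i with
          | zero => simp
          | succ i ih =>
            rw [pow_succ, Module.End.mul_apply, h2, map_smul, ih, smul_smul, pow_succ, mul_comm]
        have hPw : P (mon w) = (∑ i ∈ Finset.range n, (lam n ^ w.length) ^ i) •
            (mon w + g (mon w)) := by
          simp only [P, LinearMap.comp_apply, LinearMap.sum_apply, h2i]
          rw [← Finset.sum_smul, map_smul]
          rfl
        rw [hPw]
        by_cases hd : n ∣ w.length
        · obtain ⟨k, hk⟩ := hd
          exact Submodule.smul_mem _ _ (hT k w (by rw [hk, mul_comm]))
        · have hne : lam n ^ w.length ≠ 1 := fun h => hd (hprim.dvd_of_pow_eq_one _ h)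
          rw [geom_sum_eq hne, ← pow_mul, mul_comm, pow_mul, hprim.pow_eq_one, one_pow, sub_self,
            zero_div, zero_smul]
          exact Submodule.zero_mem _
      exact hle hy
    have h2x : ∀ i : ℕ, (g2 ^ i) x = x := by
      intro i
      induction i with
      | zero => simp
      | succ i ih =>
        rw [pow_succ, Module.End.mul_apply]
        have : g2 x = x := by
          change g (g x) = x
          rw [hx, hx]
        rw [this, ih]
    have hPx : P x = (2 * n : ℂ) • x := by
      simp only [P, LinearMap.comp_apply, LinearMap.sum_apply, h2x]
      have hTx : T x = (2 : ℂ) • x := by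
        change x + g x = _
        rw [hx, two_smul]
      rw [Finset.sum_const, Finset.card_range, map_nsmul, hTx, ← Nat.cast_smul_eq_nsmul ℂ, smul_smul,
        mul_comm]
    have hmem := Submodule.smul_mem _ ((2 * n : ℂ)⁻¹) (hP x)
    rw [hPx, smul_smul, inv_mul_cancel₀ (mul_ne_zero two_ne_zero hn'), one_smul] at hmem
    exact hmem
  · have hle : B ≤ AlgHom.equalizer (g : DUAlg →ₐ[ℂ] DUAlg) (AlgHom.id ℂ DUAlg) := by
      rw [hBdef]
      apply Algebra.adjoin_le
      rintro _ ⟨a, b, c, h, rfl⟩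
      change g (orbitSum n a b c) = orbitSum n a b c
      obtain ⟨k, hk⟩ : n ∣ a + 2 * b + c := by
        rcases h with h | h | h <;> rw [h] <;> simp
      have hgg : g (g (uGen ^ a * (dGen * uGen) ^ b * dGen ^ c)) =
          uGen ^ a * (dGen * uGen) ^ b * dGen ^ c := by
        have h1 : lam n ^ (a + 2 * b + c) = 1 := by
          rw [hk, pow_mul, hprim.pow_eq_one, one_pow]
        have : g (g (uGen ^ a * (dGen * uGen) ^ b * dGen ^ c)) =
            lam n ^ (a + 2 * b + c) • (uGen ^ a * (dGen * uGen) ^ b * dGen ^ c) := by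
          simp only [map_mul, map_pow, map_smul, hgu, hgd, smul_pow, smul_mul_assoc,
            mul_smul_comm, smul_smul, pow_add, pow_mul]
          congr 1
          ring
        rw [this, h1, one_smul]
      rw [← g_orbit n g hgu hgd, map_add, hgg, add_comm]
    intro x hx
    exact hle hx
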